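/- Let k be a fixed positive integer, let O be a bounded self-adjoint operator on L²(ℝ^{3k}), and let φ ∈ L²(ℝ³) with ‖φ‖ = 1. For each N ≥ k let ψ_N ∈ L²_s(ℝ^{3N}) be permutation-symmetric with ‖ψ_N‖ = 1, and assume that for every fixed ℓ ≥ 1 and every bounded operator B on L²(ℝ^{3ℓ}) one has ⟨ψ_N, B_{(1,…,ℓ)} ψ_N⟩ → ⟨φ^{⊗ℓ}, B φ^{⊗ℓ}⟩ as N → ∞. Then the second moment of the centred averaged sum vanishes in the limit: ⟨ψ_N, ( binom(N,k)^{-1} Σ_{i_k ∈ I_N^{(k)}} (O_{i_k} − ⟨φ^{⊗k}, O φ^{⊗k}⟩) )² ψ_N⟩ → 0 as N → ∞. -/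

import Mathlib

/-!
Expanding the square, the second moment is `binom(N,k)⁻²` times the sum of
`⟪ψ_N, A_ι A_ι' ψ_N⟫` over pairs `(ι, ι')` of injective `k`-tuples, where `A_ι` is the centred
lift of `O`.  There are `(N!/(N-k)!)²` pairs, which cancels `binom(N,k)⁻²` up to the constant
`(k!)²`, so it is enough to show that a pair contributes `o(1)` on average.

* Every term is bounded by a constant, because a lift of `O` has norm at most `‖O‖`
  (`opNorm_le_of_tens`).  Hence the pairs with overlapping ranges, an asymptotically vanishing
  fraction of all pairs (`tendsto_descFactorial_ratio`), are negligible.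
* For disjoint `ι, ι'`, condensation is applied once, to the projection `|Φ⟩⟨Φ|` with
  `Φ = φ^{⊗2k}`.  Its lift `Q` projects onto the vectors `Φ ⊗ g`, so
  `1 - ⟪ψ_N, Q ψ_N⟫ → 0` is the squared distance of `ψ_N` to some `Φ ⊗ g`; by permutation
  symmetry the `2k` labels carrying `Φ` may be taken to be those of `(ι, ι')`, uniformly in the
  pair (`exists_ketBraLift`).  On `Φ ⊗ g = φ^{⊗k} ⊗ φ^{⊗k} ⊗ g` the two centred observables
  are exactly uncorrelated (`inner_centred_pair_eq_zero`).

`norm_second_moment_le` combines the two contributions.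

The lifts are only known through their action on products `f(x ∘ ι) g(x)`.  That this determines
the operator norm comes from the totality of products in `L²`; that `V V†`, `V g = Φ ⊗ g`, really
is a lift of `|Φ⟩⟨Φ|` needs that `g` is square integrable as soon as `f ⊗ g` is and `f ≠ 0`.
-/

/- Vanishing of the second moment of the centred averaged sum of a bounded k-particle
operator in a Bose-Einstein condensate. -/

open MeasureTheory Filter
open scoped ENNReal ComplexInnerProductSpace

noncomputable section

/-- Physical one-particle configuration space `ℝ³`. -/
abbrev R3 : Type := EuclideanSpace ℝ (Fin 3)

/-- The one-particle Hilbert space `L²(ℝ³)`. -/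
abbrev OneH : Type := Lp ℂ 2 (volume : Measure R3)

/-- The `m`-particle Hilbert space `L²(ℝ^{3m})`, realized as `L²((ℝ³)^m)`. -/
abbrev HS (m : ℕ) : Type := Lp ℂ 2 (volume : Measure (Fin m → R3))

/-- `Φ` is the `m`-fold tensor power `φ^{⊗m}`, i.e. a.e. equal to
`(x_1, …, x_m) ↦ ∏_j φ(x_j)`. -/
def IsTensorPow (m : ℕ) (φ : OneH) (Φ : HS m) : Prop :=
  ⇑Φ =ᵐ[volume] fun x : Fin m → R3 => ∏ j, φ (x j)

/-- `T` is the lift `O_{i_k}` of the `k`-particle operator `O` to the `N`-particle space,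
acting as `O` in the variables `x_{ι 0}, …, x_{ι (k-1)}` and as the identity elsewhere.
It is characterized by its action on products `f(x ∘ ι) · g(x)` where `g` depends only on
the variables outside the range of `ι`. -/
def IsLift (k N : ℕ) (O : HS k →L[ℂ] HS k) (ι : Fin k → Fin N)
    (T : HS N →L[ℂ] HS N) : Prop :=
  ∀ (f : HS k) (g : (Fin N → R3) → ℂ) (F G : HS N),
    (∀ x y : Fin N → R3, (∀ j, j ∉ Set.range ι → x j = y j) → g x = g y) →
    (⇑F =ᵐ[volume] fun x => f (x ∘ ι) * g x) →
    (⇑G =ᵐ[volume] fun x => (O f) (x ∘ ι) * g x) →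
    T F = G

/-! ### Tensor products in `L²` -/

section Tensor

variable {X Y Z : Type*} [MeasurableSpace X] [MeasurableSpace Y] [MeasurableSpace Z]
  {μ : Measure X} {ν : Measure Y} {ρ : Measure Z}
  {e : Z ≃ᵐ X × Y}

theorem ae_fst (he : MeasurePreserving e ρ (μ.prod ν)) {p : X → Prop} (h : ∀ᵐ x ∂μ, p x) :
    ∀ᵐ z ∂ρ, p (e z).1 :=
  (Measure.quasiMeasurePreserving_fst.comp he.quasiMeasurePreserving).ae h

theorem ae_snd (he : MeasurePreserving e ρ (μ.prod ν)) {p : Y → Prop} (h : ∀ᵐ y ∂ν, p y) :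
    ∀ᵐ z ∂ρ, p (e z).2 :=
  (Measure.quasiMeasurePreserving_snd.comp he.quasiMeasurePreserving).ae h

theorem memLp_tens (he : MeasurePreserving e ρ (μ.prod ν)) (f : Lp ℂ 2 μ) (g : Lp ℂ 2 ν) :
    MemLp (fun z => f (e z).1 * g (e z).2) 2 ρ := by
  have hm : AEStronglyMeasurable (fun p : X × Y => f p.1 * g p.2) (μ.prod ν) :=
    (Lp.aestronglyMeasurable f).comp_fst.mul (Lp.aestronglyMeasurable g).comp_snd
  have h : MemLp (fun p : X × Y => f p.1 * g p.2) 2 (μ.prod ν) := by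
    rw [memLp_two_iff_integrable_sq_norm hm]
    have hf := (memLp_two_iff_integrable_sq_norm (Lp.aestronglyMeasurable f)).1 (Lp.memLp f)
    have hg := (memLp_two_iff_integrable_sq_norm (Lp.aestronglyMeasurable g)).1 (Lp.memLp g)
    simpa [mul_pow] using hf.mul_prod hg
  exact h.comp_measurePreserving he

/-- The tensor product `f ⊗ g`, transported to `L²(Z)` along `e : Z ≃ X × Y`. -/
def tens (he : MeasurePreserving e ρ (μ.prod ν)) (f : Lp ℂ 2 μ) (g : Lp ℂ 2 ν) : Lp ℂ 2 ρ :=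
  (memLp_tens he f g).toLp _

theorem coeFn_tens (he : MeasurePreserving e ρ (μ.prod ν)) (f : Lp ℂ 2 μ) (g : Lp ℂ 2 ν) :
    ⇑(tens he f g) =ᵐ[ρ] fun z => f (e z).1 * g (e z).2 :=
  MemLp.coeFn_toLp _

theorem tens_add_left (he : MeasurePreserving e ρ (μ.prod ν)) (f f' : Lp ℂ 2 μ)
    (g : Lp ℂ 2 ν) : tens he (f + f') g = tens he f g + tens he f' g := by
  refine Lp.ext ?_
  filter_upwards [coeFn_tens he (f + f') g, coeFn_tens he f g, coeFn_tens he f' g,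
    Lp.coeFn_add (tens he f g) (tens he f' g), ae_fst he (Lp.coeFn_add f f')]
    with z h1 h2 h3 h4 h5
  rw [h1, h4, Pi.add_apply, h2, h3, h5, Pi.add_apply, add_mul]

theorem tens_add_right (he : MeasurePreserving e ρ (μ.prod ν)) (f : Lp ℂ 2 μ)
    (g g' : Lp ℂ 2 ν) : tens he f (g + g') = tens he f g + tens he f g' := by
  refine Lp.ext ?_
  filter_upwards [coeFn_tens he f (g + g'), coeFn_tens he f g, coeFn_tens he f g',
    Lp.coeFn_add (tens he f g) (tens he f g'), ae_snd he (Lp.coeFn_add g g')]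
    with z h1 h2 h3 h4 h5
  rw [h1, h4, Pi.add_apply, h2, h3, h5, Pi.add_apply, mul_add]

theorem tens_smul_left (he : MeasurePreserving e ρ (μ.prod ν)) (c : ℂ) (f : Lp ℂ 2 μ)
    (g : Lp ℂ 2 ν) : tens he (c • f) g = c • tens he f g := by
  refine Lp.ext ?_
  filter_upwards [coeFn_tens he (c • f) g, coeFn_tens he f g,
    Lp.coeFn_smul c (tens he f g), ae_fst he (Lp.coeFn_smul c f)] with z h1 h2 h3 h4
  rw [h1, h3, Pi.smul_apply, h2, h4, Pi.smul_apply, smul_eq_mul, smul_eq_mul, mul_assoc]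

theorem tens_smul_right (he : MeasurePreserving e ρ (μ.prod ν)) (c : ℂ) (f : Lp ℂ 2 μ)
    (g : Lp ℂ 2 ν) : tens he f (c • g) = c • tens he f g := by
  refine Lp.ext ?_
  filter_upwards [coeFn_tens he f (c • g), coeFn_tens he f g,
    Lp.coeFn_smul c (tens he f g), ae_snd he (Lp.coeFn_smul c g)] with z h1 h2 h3 h4
  rw [h1, h3, Pi.smul_apply, h2, h4, Pi.smul_apply, smul_eq_mul, smul_eq_mul, mul_left_comm]

/-- If `f ⊗ g` is square integrable and `f ≠ 0`, then `g` agrees a.e. with an element of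
`L²(Y)`: it is proportional to a section of `f ⊗ g`. -/
theorem exists_Lp_of_tens [SFinite μ] [SFinite ν]
    (he : MeasurePreserving e ρ (μ.prod ν)) (F : Lp ℂ 2 ρ) (f : Lp ℂ 2 μ) (hf : f ≠ 0) (g : Y → ℂ)
    (h : ⇑F =ᵐ[ρ] fun z => f (e z).1 * g (e z).2) : ∃ g' : Lp ℂ 2 ν, ⇑g' =ᵐ[ν] g := by
  have hsymm : MeasurePreserving e.symm (μ.prod ν) ρ := he.symm e
  have hmem : MemLp (fun p => F (e.symm p)) 2 (μ.prod ν) :=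
    (Lp.memLp F).comp_measurePreserving hsymm
  have h1 : ∀ᵐ p ∂(μ.prod ν), F (e.symm p) = f p.1 * g p.2 := by
    filter_upwards [hsymm.quasiMeasurePreserving.ae h] with p hp
    simpa using hp
  have h2 := Measure.ae_ae_of_ae_prod h1
  have h3 := hmem.1.prodMk_left
  have h4 := ((memLp_two_iff_integrable_sq_norm hmem.1).1 hmem).prod_right_ae
  have h5 : ∃ᵐ x ∂μ, f x ≠ 0 := by
    intro h6
    refine hf (Lp.ext ?_)
    filter_upwards [h6, Lp.coeFn_zero ℂ 2 μ] with x hx h0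
    rw [h0]
    simpa using hx
  obtain ⟨x, hx, hx2, hx3, hx4⟩ := (h5.and_eventually (h2.and (h3.and h4))).exists
  have hs : MemLp (fun y => F (e.symm (x, y))) 2 ν :=
    (memLp_two_iff_integrable_sq_norm hx3).2 hx4
  refine ⟨(hs.const_mul (f x)⁻¹).toLp _, ?_⟩
  filter_upwards [(hs.const_mul (f x)⁻¹).coeFn_toLp, hx2] with y hy hy2
  rw [hy, hy2, inv_mul_cancel_left₀ hx]

variable [SigmaFinite μ] [SigmaFinite ν]

theorem inner_tens (he : MeasurePreserving e ρ (μ.prod ν)) (f f' : Lp ℂ 2 μ)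
    (g g' : Lp ℂ 2 ν) :
    ⟪tens he f g, tens he f' g'⟫ = ⟪f, f'⟫ * ⟪g, g'⟫ := by
  rw [L2.inner_def, L2.inner_def, L2.inner_def, ← integral_prod_mul, ← he.integral_comp']
  refine integral_congr_ae ?_
  filter_upwards [coeFn_tens he f g, coeFn_tens he f' g'] with z h1 h2
  rw [h1, h2]
  simp only [RCLike.inner_apply, map_mul]
  ring

theorem norm_tens (he : MeasurePreserving e ρ (μ.prod ν)) (f : Lp ℂ 2 μ) (g : Lp ℂ 2 ν) :
    ‖tens he f g‖ = ‖f‖ * ‖g‖ := by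
  have h := inner_tens he f f g g
  rw [inner_self_eq_norm_sq_to_K, inner_self_eq_norm_sq_to_K, inner_self_eq_norm_sq_to_K,
    ← mul_pow] at h
  have h2 : ‖tens he f g‖ ^ 2 = (‖f‖ * ‖g‖) ^ 2 := by exact_mod_cast h
  exact (pow_left_inj₀ (norm_nonneg _) (by positivity) two_ne_zero).1 h2

/-- `g ↦ f ⊗ g` as a bounded operator. -/
def tensL (he : MeasurePreserving e ρ (μ.prod ν)) (f : Lp ℂ 2 μ) : Lp ℂ 2 ν →L[ℂ] Lp ℂ 2 ρ :=
  LinearMap.mkContinuous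
    { toFun := tens he f
      map_add' := tens_add_right he f
      map_smul' := fun c g => tens_smul_right he c f g } ‖f‖
    (fun g => (norm_tens he f g).le)

@[simp] theorem tensL_apply (he : MeasurePreserving e ρ (μ.prod ν)) (f : Lp ℂ 2 μ)
    (g : Lp ℂ 2 ν) : tensL he f g = tens he f g := rfl

/-- A function on `X × Y` whose integral over every rectangle of finite measure vanishes is
zero almost everywhere: rectangles form a generating `π`-system. -/
theorem ae_eq_zero_of_rect {F : X × Y → ℂ} (hF : MemLp F 2 (μ.prod ν))
    (h : ∀ (A : Set X) (B : Set Y), MeasurableSet A → MeasurableSet B → μ A ≠ ∞ → ν B ≠ ∞ →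
      ∫ p in A ×ˢ B, F p ∂(μ.prod ν) = 0) : F =ᵐ[μ.prod ν] 0 := by
  have key : ∀ n : ℕ, ∀ᵐ p ∂(μ.prod ν),
      p ∈ spanningSets μ n ×ˢ spanningSets ν n → F p = 0 := by
    intro n
    set R : Set (X × Y) := spanningSets μ n ×ˢ spanningSets ν n with hR
    have hA := measurableSet_spanningSets μ n
    have hB := measurableSet_spanningSets ν n
    have hA' := (measure_spanningSets_lt_top μ n).ne
    have hB' := (measure_spanningSets_lt_top ν n).ne
    have hRm : MeasurableSet R := hA.prod hB
    have : IsFiniteMeasure ((μ.prod ν).restrict R) := by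
      refine ⟨?_⟩
      rw [Measure.restrict_apply_univ, hR, Measure.prod_prod]
      exact ENNReal.mul_lt_top hA'.lt_top hB'.lt_top
    have hint : Integrable F ((μ.prod ν).restrict R) :=
      (hF.mono_measure Measure.restrict_le_self).integrable (by norm_num)
    have hall : ∀ s : Set (X × Y), MeasurableSet s →
        ∫ p in s, F p ∂((μ.prod ν).restrict R) = 0 := by
      intro s hs
      induction s, hs using MeasurableSpace.induction_on_inter generateFrom_prod.symm
        isPiSystem_prod with
      | empty => simp
      | basic t ht =>
        obtain ⟨A, hA1, B, hB1, rfl⟩ := ht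
        rw [Measure.restrict_restrict (MeasurableSet.prod hA1 hB1), hR, Set.prod_inter_prod]
        exact h _ _ (MeasurableSet.inter hA1 hA) (MeasurableSet.inter hB1 hB)
          (measure_ne_top_of_subset Set.inter_subset_right hA')
          (measure_ne_top_of_subset Set.inter_subset_right hB')
      | compl t ht ih =>
        rw [setIntegral_compl ht hint, ih, sub_zero]
        exact h _ _ hA hB hA' hB'
      | iUnion f hd hm ih =>
        rw [integral_iUnion hm hd hint.integrableOn]
        simp [ih]
    have := hint.ae_eq_zero_of_forall_setIntegral_eq_zero (fun s hs _ => hall s hs)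
    exact (ae_restrict_iff' hRm).1 this
  filter_upwards [ae_all_iff.2 key] with p hp
  have hx := mem_spanningSetsIndex μ p.1
  have hy := mem_spanningSetsIndex ν p.2
  refine hp (max (spanningSetsIndex μ p.1) (spanningSetsIndex ν p.2)) ⟨?_, ?_⟩
  · exact monotone_spanningSets μ (le_max_left _ _) hx
  · exact monotone_spanningSets ν (le_max_right _ _) hy

/-- Product functions are total in `L²(Z)`. -/
theorem eq_zero_of_forall_inner_tens (he : MeasurePreserving e ρ (μ.prod ν)) (F : Lp ℂ 2 ρ)
    (h : ∀ f g, ⟪tens he f g, F⟫ = 0) : F = 0 := by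
  have hsymm : MeasurePreserving e.symm (μ.prod ν) ρ := he.symm e
  have hz : (fun p => F (e.symm p)) =ᵐ[μ.prod ν] 0 := by
    refine ae_eq_zero_of_rect ((Lp.memLp F).comp_measurePreserving hsymm) ?_
    intro A B hA hB hA' hB'
    rw [← h (indicatorConstLp 2 hA hA' 1) (indicatorConstLp 2 hB hB' 1), L2.inner_def,
      ← integral_indicator (hA.prod hB), ← he.integral_comp']
    refine integral_congr_ae ?_
    filter_upwards [coeFn_tens he (indicatorConstLp 2 hA hA' 1) (indicatorConstLp 2 hB hB' 1),
      ae_fst he (indicatorConstLp_coeFn (p := 2) (hs := hA) (hμs := hA') (c := (1 : ℂ))),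
      ae_snd he (indicatorConstLp_coeFn (p := 2) (hs := hB) (hμs := hB') (c := (1 : ℂ)))]
      with z h1 h2 h3
    rw [h1, h2, h3]
    by_cases hzA : (e z).1 ∈ A <;> by_cases hzB : (e z).2 ∈ B <;>
      simp [Set.indicator, hzA, hzB]
  refine Lp.ext ?_
  filter_upwards [he.quasiMeasurePreserving.ae hz, Lp.coeFn_zero ℂ 2 ρ] with z h1 h2
  rw [h2]
  simpa using h1

/-- An operator acting as `O` on the first factor of every product is bounded by `‖O‖`.  Every
vector is a limit of finite sums `∑ f_j ⊗ b_j` with `b` a Hilbert basis of `L²(Y)`; such sums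
have squared norm `∑ ‖f_j‖²`, so applying `O` to every `f_j` costs at most a factor `‖O‖`. -/
theorem opNorm_le_of_tens (he : MeasurePreserving e ρ (μ.prod ν))
    (O : Lp ℂ 2 μ →L[ℂ] Lp ℂ 2 μ) (T : Lp ℂ 2 ρ →L[ℂ] Lp ℂ 2 ρ)
    (hT : ∀ f g, T (tens he f g) = tens he (O f) g) : ‖T‖ ≤ ‖O‖ := by
  classical
  obtain ⟨w, b, -⟩ := exists_hilbertBasis ℂ (Lp ℂ 2 ν)
  let V : w → Lp ℂ 2 μ →ₗ[ℂ] Lp ℂ 2 ρ := fun j =>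
    { toFun := fun f => tens he f (b j)
      map_add' := fun f f' => tens_add_left he f f' (b j)
      map_smul' := fun c f => tens_smul_left he c f (b j) }
  let L : (w →₀ Lp ℂ 2 μ) →ₗ[ℂ] Lp ℂ 2 ρ := Finsupp.lsum ℂ V
  have hVinner : ∀ i j f f', ⟪V i f, V j f'⟫ = if i = j then ⟪f, f'⟫ else 0 := by
    intro i j f f'
    change ⟪tens he f (b i), tens he f' (b j)⟫ = _
    rw [inner_tens, orthonormal_iff_ite.1 b.orthonormal i j]
    split_ifs <;> simp
  have hsum : ∀ (s : Finset w) (a : w → Lp ℂ 2 μ),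
      ‖∑ j ∈ s, V j (a j)‖ ^ 2 = ∑ j ∈ s, ‖a j‖ ^ 2 := by
    intro s a
    have h1 : ⟪∑ j ∈ s, V j (a j), ∑ j ∈ s, V j (a j)⟫ = ∑ j ∈ s, ⟪a j, a j⟫ := by
      rw [sum_inner]
      refine Finset.sum_congr rfl fun i hi => ?_
      rw [inner_sum]
      simp [hVinner, hi]
    simp only [inner_self_eq_norm_sq_to_K] at h1
    exact_mod_cast h1
  have hLT : ∀ a, ‖T (L a)‖ ≤ ‖O‖ * ‖L a‖ := by
    intro a
    have h1 : L a = ∑ j ∈ a.support, V j (a j) := rfl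
    have h2 : T (L a) = ∑ j ∈ a.support, V j (O (a j)) := by
      rw [h1, map_sum]
      exact Finset.sum_congr rfl fun j _ => hT _ _
    refine (sq_le_sq₀ (norm_nonneg _) (by positivity)).1 ?_
    rw [h2, mul_pow, h1, hsum, hsum, Finset.mul_sum]
    refine Finset.sum_le_sum fun j _ => ?_
    rw [← mul_pow]
    gcongr
    exact O.le_opNorm _
  have hdense : DenseRange L := by
    have h0 : (LinearMap.range L)ᗮ = ⊥ := by
      rw [Submodule.eq_bot_iff]
      intro F hF
      refine eq_zero_of_forall_inner_tens he F fun f g => ?_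
      have hb : ∀ j, ⟪b j, (ContinuousLinearMap.adjoint (tensL he f)) F⟫ = 0 := by
        intro j
        rw [ContinuousLinearMap.adjoint_inner_right]
        refine (Submodule.mem_orthogonal _ _).1 hF _ ⟨Finsupp.single j f, ?_⟩
        simp only [L, Finsupp.lsum_single]
        rfl
      have hz : (ContinuousLinearMap.adjoint (tensL he f)) F = 0 := by
        apply b.repr.injective
        ext j
        simp [HilbertBasis.repr_apply_apply, hb]
      rw [← tensL_apply, ← ContinuousLinearMap.adjoint_inner_right, hz, inner_zero_right]
    have h1 := Submodule.topologicalClosure_eq_top_iff.2 h0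
    intro F
    have : F ∈ (LinearMap.range L).topologicalClosure := by rw [h1]; trivial
    exact this
  refine T.opNorm_le_bound (norm_nonneg _) fun F => ?_
  refine hdense.induction_on (p := fun F => ‖T F‖ ≤ ‖O‖ * ‖F‖) F ?_ hLT
  exact isClosed_le (by fun_prop) (by fun_prop)

end Tensor

/-! ### Splitting the labels -/

section Split

variable {m n N : ℕ}

/-- The identification `(ℝ³)^N ≃ (ℝ³)^m × (ℝ³)^n` given by a splitting `s` of the `N` labels
into `m` and `n` labels. -/
def splitEquiv (s : Fin m ⊕ Fin n ≃ Fin N) :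
    (Fin N → R3) ≃ᵐ (Fin m → R3) × (Fin n → R3) :=
  (MeasurableEquiv.piCongrLeft (fun _ => R3) s).symm.trans
    (MeasurableEquiv.sumPiEquivProdPi (fun _ => R3))

theorem splitEquiv_fst (s : Fin m ⊕ Fin n ≃ Fin N) (x : Fin N → R3) :
    (splitEquiv s x).1 = fun i => x (s (Sum.inl i)) := rfl

theorem splitEquiv_snd (s : Fin m ⊕ Fin n ≃ Fin N) (x : Fin N → R3) :
    (splitEquiv s x).2 = fun i => x (s (Sum.inr i)) := rfl

theorem splitEquiv_mp (s : Fin m ⊕ Fin n ≃ Fin N) :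
    MeasurePreserving (splitEquiv s) (volume : Measure (Fin N → R3))
      ((volume : Measure (Fin m → R3)).prod (volume : Measure (Fin n → R3))) :=
  (volume_measurePreserving_sumPiEquivProdPi (fun _ : Fin m ⊕ Fin n => R3)).comp
    ((volume_measurePreserving_piCongrLeft (fun _ : Fin N => R3) s).symm _)

/-- The function `f(x_{s(1)}, …, x_{s(m)}) g(x_{s(m+1)}, …, x_{s(m+n)})`. -/
def splitTens (s : Fin m ⊕ Fin n ≃ Fin N) (f : HS m) (g : HS n) : HS N :=
  tens (splitEquiv_mp s) f g

theorem coeFn_splitTens (s : Fin m ⊕ Fin n ≃ Fin N) (f : HS m) (g : HS n) :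
    ⇑(splitTens s f g) =ᵐ[volume]
      fun x => f (fun i => x (s (Sum.inl i))) * g (fun j => x (s (Sum.inr j))) :=
  coeFn_tens (splitEquiv_mp s) f g

theorem inner_splitTens (s : Fin m ⊕ Fin n ≃ Fin N) (f f' : HS m) (g g' : HS n) :
    ⟪splitTens s f g, splitTens s f' g'⟫ = ⟪f, f'⟫ * ⟪g, g'⟫ :=
  inner_tens (splitEquiv_mp s) f f' g g'

theorem norm_splitTens (s : Fin m ⊕ Fin n ≃ Fin N) (f : HS m) (g : HS n) :
    ‖splitTens s f g‖ = ‖f‖ * ‖g‖ :=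
  norm_tens (splitEquiv_mp s) f g

/-- A lift along `ι` acts as `O` on the first factor of any splitting whose first labels are
`ι`. -/
theorem IsLift.apply_splitTens {O : HS m →L[ℂ] HS m} {ι : Fin m → Fin N}
    {T : HS N →L[ℂ] HS N} (hT : IsLift m N O ι T) (s : Fin m ⊕ Fin n ≃ Fin N)
    (hs : ∀ i, s (Sum.inl i) = ι i) (f : HS m) (g : HS n) :
    T (splitTens s f g) = splitTens s (O f) g := by
  have hι : ∀ x : Fin N → R3, (fun i => x (s (Sum.inl i))) = x ∘ ι := fun x => by
    funext i; simp [hs]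
  refine hT f (fun x => g (fun j => x (s (Sum.inr j)))) _ _ ?_ ?_ ?_
  · intro x y hxy
    refine congrArg g (funext fun j => hxy _ ?_)
    rintro ⟨i, hi⟩
    rw [← hs] at hi
    simpa using s.injective hi
  · simpa only [hι] using coeFn_splitTens s f g
  · simpa only [hι] using coeFn_splitTens s (O f) g

/-- Every injective choice of `m` labels out of `m + n` extends to a splitting. -/
theorem exists_split (hN : N = m + n) (ι : Fin m → Fin N) (hι : Function.Injective ι) :
    ∃ s : Fin m ⊕ Fin n ≃ Fin N, ∀ i, s (Sum.inl i) = ι i := by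
  classical
  have hc : Fintype.card ((Set.range ι)ᶜ : Set (Fin N)) = n := by
    rw [Fintype.card_compl_set, Set.card_range_of_injective hι]
    simp [hN]
  refine ⟨(Equiv.sumCongr (Equiv.ofInjective ι hι) (Fintype.equivFinOfCardEq hc).symm).trans
    (Equiv.Set.sumCompl (Set.range ι)), fun i => ?_⟩
  simp

theorem IsLift.opNorm_le {O : HS m →L[ℂ] HS m} {ι : Fin m → Fin N}
    {T : HS N →L[ℂ] HS N} (hT : IsLift m N O ι T) (hι : Function.Injective ι)
    (hmN : m ≤ N) : ‖T‖ ≤ ‖O‖ := by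
  obtain ⟨n, hn⟩ := Nat.exists_eq_add_of_le hmN
  obtain ⟨s, hs⟩ := exists_split hn ι hι
  exact opNorm_le_of_tens (splitEquiv_mp s) O T (hT.apply_splitTens s hs)

/-- The rank-one operator `|Φ⟩⟨Φ|`. -/
def ketBra (Φ : HS m) : HS m →L[ℂ] HS m := (innerSL ℂ Φ).smulRight Φ

theorem ketBra_apply (Φ f : HS m) : ketBra Φ f = ⟪Φ, f⟫ • Φ := rfl

/-- The lift of `|Φ⟩⟨Φ|`, namely `V V†` with `V g = Φ ⊗ g`. -/
def ketBraLift (s : Fin m ⊕ Fin n ≃ Fin N) (Φ : HS m) : HS N →L[ℂ] HS N :=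
  tensL (splitEquiv_mp s) Φ ∘L ContinuousLinearMap.adjoint (tensL (splitEquiv_mp s) Φ)

theorem adjoint_tensL_splitTens (s : Fin m ⊕ Fin n ≃ Fin N) (Φ f : HS m) (g : HS n) :
    ContinuousLinearMap.adjoint (tensL (splitEquiv_mp s) Φ) (splitTens s f g) =
      ⟪Φ, f⟫ • g := by
  refine ext_inner_left ℂ fun h => ?_
  rw [ContinuousLinearMap.adjoint_inner_right, inner_smul_right]
  exact inner_splitTens s Φ f h g

theorem ketBraLift_isLift (s : Fin m ⊕ Fin n ≃ Fin N) (Φ : HS m) (ι : Fin m → Fin N)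
    (hs : ∀ i, s (Sum.inl i) = ι i) : IsLift m N (ketBra Φ) ι (ketBraLift s Φ) := by
  intro f g F G hg hF hG
  -- For `f = 0` the function `g` is arbitrary, and `F = G = 0`.
  by_cases hf : f = 0
  · have h0 : ∀ᵐ x : Fin N → R3 ∂volume, (0 : HS m) (fun i => x (s (Sum.inl i))) = 0 :=
      ae_fst (splitEquiv_mp s) (Lp.coeFn_zero ℂ 2 (volume : Measure (Fin m → R3)))
    have hι : ∀ x : Fin N → R3, (fun i => x (s (Sum.inl i))) = x ∘ ι := fun x => by
      funext i; simp [hs]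
    simp only [hι] at h0
    subst hf
    have hF0 : F = 0 := by
      refine Lp.ext ?_
      filter_upwards [hF, h0, Lp.coeFn_zero ℂ 2 (volume : Measure (Fin N → R3))]
        with x h1 h2 h3
      rw [h1, h2, h3, zero_mul, Pi.zero_apply]
    have hG0 : G = 0 := by
      refine Lp.ext ?_
      rw [map_zero] at hG
      filter_upwards [hG, h0, Lp.coeFn_zero ℂ 2 (volume : Measure (Fin N → R3))]
        with x h1 h2 h3
      rw [h1, h2, h3, zero_mul, Pi.zero_apply]
    rw [hF0, hG0, map_zero]
  · -- `g` only sees the last `n` variables, so it factors through them.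
    let g₁ : (Fin n → R3) → ℂ := fun y => g ((splitEquiv s).symm (0, y))
    have hg₁ : ∀ x, g x = g₁ (splitEquiv s x).2 := by
      intro x
      refine hg _ _ fun j hj => ?_
      obtain ⟨i | i, rfl⟩ := s.surjective j
      · exact absurd ⟨i, (hs i).symm⟩ hj
      · have h2 : (splitEquiv s ((splitEquiv s).symm (0, (splitEquiv s x).2))).2 =
            (splitEquiv s x).2 := by rw [MeasurableEquiv.apply_symm_apply]
        exact (congrFun h2 i).symm
    have hfst : ∀ x, x ∘ ι = (splitEquiv s x).1 := fun x => by
      funext i; simp [splitEquiv_fst, hs]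
    simp only [hg₁, hfst] at hF hG
    obtain ⟨g', hg'⟩ := exists_Lp_of_tens (splitEquiv_mp s) F f hf g₁ hF
    have hsnd := ae_snd (splitEquiv_mp s) hg'
    have hF' : F = splitTens s f g' := by
      refine Lp.ext ?_
      filter_upwards [hF, hsnd, coeFn_tens (splitEquiv_mp s) f g'] with x h1 h2 h3
      rw [h1, splitTens, h3, h2]
    have hG' : G = splitTens s (ketBra Φ f) g' := by
      refine Lp.ext ?_
      filter_upwards [hG, hsnd, coeFn_tens (splitEquiv_mp s) (ketBra Φ f) g'] with x h1 h2 h3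
      rw [h1, splitTens, h3, h2]
    rw [hF', hG', ketBra_apply, ketBraLift, ContinuousLinearMap.comp_apply,
      adjoint_tensL_splitTens, map_smul, splitTens, tens_smul_left, tensL_apply]

/-- Change of labels `x ↦ x ∘ σ` on `(ℝ³)^N` preserves the volume. -/
theorem perm_mp (σ : Equiv.Perm (Fin N)) :
    MeasurePreserving (fun x : Fin N → R3 => x ∘ σ) volume volume :=
  (volume_measurePreserving_piCongrLeft (fun _ : Fin N => R3) σ).symm _

/-- For symmetric `ψ`, the distance to `Φ ⊗ g` does not depend on which labels carry `Φ`. -/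
theorem norm_sub_splitTens_eq (ψ : HS N)
    (hψ : ∀ σ : Equiv.Perm (Fin N), ∀ᵐ x : Fin N → R3 ∂volume, ψ (x ∘ σ) = ψ x)
    (s t : Fin m ⊕ Fin n ≃ Fin N) (Φ : HS m) (g : HS n) :
    ‖ψ - splitTens t Φ g‖ = ‖ψ - splitTens s Φ g‖ := by
  set σ : Equiv.Perm (Fin N) := s.symm.trans t with hσ
  have h : ψ - splitTens t Φ g =
      Lp.compMeasurePreserving _ (perm_mp σ) (ψ - splitTens s Φ g) := by
    refine Lp.ext ?_
    filter_upwards [Lp.coeFn_sub ψ (splitTens t Φ g), coeFn_splitTens t Φ g, hψ σ,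
      Lp.coeFn_compMeasurePreserving (ψ - splitTens s Φ g) (perm_mp σ),
      (perm_mp σ).quasiMeasurePreserving.ae (Lp.coeFn_sub ψ (splitTens s Φ g)),
      (perm_mp σ).quasiMeasurePreserving.ae (coeFn_splitTens s Φ g)] with x h1 h2 h3 h4 h5 h6
    rw [h1, h4, Function.comp_apply, h5, Pi.sub_apply, Pi.sub_apply, h2, h6, h3]
    simp [hσ]
  rw [h, Lp.norm_compMeasurePreserving]

/-- The lift `Q` of `|Φ⟩⟨Φ|` to the first `m` variables exists, and it measures how far a
symmetric unit vector `ψ` is from a product `Φ ⊗ g`, for any choice of the `m` variables that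
carry `Φ`. -/
theorem exists_ketBraLift (Φ : HS m) (hΦ : ‖Φ‖ = 1) (N : ℕ) :
    ∃ Q : HS N →L[ℂ] HS N, ∀ h : m ≤ N, IsLift m N (ketBra Φ) (Fin.castLE h) Q ∧
      ∀ ψ : HS N, ‖ψ‖ = 1 →
        (∀ σ : Equiv.Perm (Fin N), ∀ᵐ x : Fin N → R3 ∂volume, ψ (x ∘ σ) = ψ x) →
        ∀ κ : Fin m → Fin N, Function.Injective κ →
          ∃ (n : ℕ) (s : Fin m ⊕ Fin n ≃ Fin N) (g : HS n), (∀ i, s (Sum.inl i) = κ i) ∧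
            ‖splitTens s Φ g‖ ≤ 1 ∧ ‖ψ - splitTens s Φ g‖ ^ 2 = 1 - (⟪ψ, Q ψ⟫).re := by
  by_cases h : m ≤ N
  swap
  · exact ⟨0, fun h' => absurd h' h⟩
  obtain ⟨n, hn⟩ := Nat.exists_eq_add_of_le h
  obtain ⟨s₀, hs₀⟩ := exists_split hn (Fin.castLE h) (Fin.castLE_injective h)
  refine ⟨ketBraLift s₀ Φ, fun _ => ⟨ketBraLift_isLift s₀ Φ _ hs₀, ?_⟩⟩
  intro ψ hψ hsym κ hκ
  obtain ⟨s, hs⟩ := exists_split hn κ hκ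
  set V := tensL (splitEquiv_mp s₀) Φ with hV
  set g := ContinuousLinearMap.adjoint V ψ with hg
  have hVg : ketBraLift s₀ Φ ψ = splitTens s₀ Φ g := rfl
  have hinner : ⟪ψ, splitTens s₀ Φ g⟫ = ((‖g‖ ^ 2 : ℝ) : ℂ) := by
    have : ⟪ψ, V g⟫ = ⟪g, g⟫ := (ContinuousLinearMap.adjoint_inner_left V g ψ).symm
    rw [inner_self_eq_norm_sq_to_K] at this
    rw [show splitTens s₀ Φ g = V g from rfl, this]
    simp
  have hsq : ‖ψ - splitTens s₀ Φ g‖ ^ 2 = 1 - ‖g‖ ^ 2 := by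
    rw [@norm_sub_sq ℂ, hψ, norm_splitTens, hΦ, hinner]
    simp only [RCLike.re_to_complex, Complex.ofReal_re]
    ring
  refine ⟨n, s, g, hs, ?_, ?_⟩
  · rw [norm_splitTens, hΦ, one_mul]
    have := sq_nonneg ‖ψ - splitTens s₀ Φ g‖
    nlinarith [norm_nonneg g]
  · rw [norm_sub_splitTens_eq ψ hsym s₀ s, hsq, hVg, hinner, Complex.ofReal_re]

end Split

/-! ### Tensor powers and separated observables -/

section TensorPower

theorem norm_isTensorPow (φ : OneH) (hφ : ‖φ‖ = 1) (m : ℕ) (Φ : HS m)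
    (hΦ : IsTensorPow m φ Φ) : ‖Φ‖ = 1 := by
  have h1 : ⟪Φ, Φ⟫ = ∏ _j : Fin m, ⟪φ, φ⟫ := by
    rw [L2.inner_def, L2.inner_def, ← integral_fintype_prod_volume_eq_prod]
    refine integral_congr_ae ?_
    filter_upwards [hΦ] with x hx
    rw [hx]
    simp only [RCLike.inner_apply, map_prod, Finset.prod_mul_distrib]
  rw [inner_self_eq_norm_sq_to_K, inner_self_eq_norm_sq_to_K, hφ] at h1
  have h2 : ‖Φ‖ ^ 2 = 1 := by
    have : ((‖Φ‖ ^ 2 : ℝ) : ℂ) = 1 := by simpa using h1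
    exact_mod_cast this
  nlinarith [norm_nonneg Φ]

variable {k n N : ℕ}

/-- The product `a ⊗ b` of two `k`-particle functions. -/
def pairTens (a b : HS k) : HS (k + k) := splitTens finSumFinEquiv a b

/-- `φ^{⊗2k} = φ^{⊗k} ⊗ φ^{⊗k}`. -/
theorem isTensorPow_add (φ : OneH) (Φ : HS k) (hΦ : IsTensorPow k φ Φ) (Ψ : HS (k + k))
    (hΨ : IsTensorPow (k + k) φ Ψ) : Ψ = pairTens Φ Φ := by
  have he := splitEquiv_mp (finSumFinEquiv (m := k) (n := k))
  refine Lp.ext ?_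
  filter_upwards [hΨ, coeFn_splitTens finSumFinEquiv Φ Φ, ae_fst he hΦ, ae_snd he hΦ]
    with x h1 h2 h3 h4
  rw [splitEquiv_fst] at h3
  rw [splitEquiv_snd] at h4
  rw [h1, pairTens, h2, h3, h4, Fin.prod_univ_add]
  simp

theorem coeFn_splitTens_pairTens (s : Fin (k + k) ⊕ Fin n ≃ Fin N) (a b : HS k) (g : HS n) :
    ⇑(splitTens s (pairTens a b) g) =ᵐ[volume] fun x =>
      a (fun i => x (s (Sum.inl (Fin.castAdd k i)))) *
        b (fun i => x (s (Sum.inl (Fin.natAdd k i)))) * g (fun j => x (s (Sum.inr j))) := by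
  filter_upwards [coeFn_splitTens s (pairTens a b) g,
    ae_fst (splitEquiv_mp s) (coeFn_splitTens finSumFinEquiv a b)] with x h1 h2
  rw [splitEquiv_fst] at h2
  rw [h1, pairTens, h2]
  simp

/-- A lift carried by the labels of the factor `a` of `a ⊗ b ⊗ g` leaves `b` alone. -/
theorem IsLift.apply_left {O : HS k →L[ℂ] HS k} {ι : Fin k → Fin N} {T : HS N →L[ℂ] HS N}
    (hT : IsLift k N O ι T) (s : Fin (k + k) ⊕ Fin n ≃ Fin N)
    (hs : ∀ i, s (Sum.inl (Fin.castAdd k i)) = ι i) (a b : HS k) (g : HS n) :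
    T (splitTens s (pairTens a b) g) = splitTens s (pairTens (O a) b) g := by
  have hι : ∀ x : Fin N → R3, (fun i => x (s (Sum.inl (Fin.castAdd k i)))) = x ∘ ι :=
    fun x => by funext i; simp [hs]
  refine hT a (fun x => b (fun i => x (s (Sum.inl (Fin.natAdd k i)))) *
    g (fun j => x (s (Sum.inr j)))) _ _ ?_ ?_ ?_
  · intro x y hxy
    congr 1
    · refine congrArg b (funext fun j => hxy _ ?_)
      rintro ⟨i, hi⟩
      rw [← hs] at hi
      have := Sum.inl_injective (s.injective hi)
      simp [Fin.ext_iff] at this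
      omega
    · refine congrArg g (funext fun j => hxy _ ?_)
      rintro ⟨i, hi⟩
      rw [← hs] at hi
      simpa using s.injective hi
  · simpa only [hι, mul_assoc] using coeFn_splitTens_pairTens s a b g
  · simpa only [hι, mul_assoc] using coeFn_splitTens_pairTens s (O a) b g

/-- A lift carried by the labels of the factor `b` of `a ⊗ b ⊗ g` leaves `a` alone. -/
theorem IsLift.apply_right {O : HS k →L[ℂ] HS k} {ι : Fin k → Fin N} {T : HS N →L[ℂ] HS N}
    (hT : IsLift k N O ι T) (s : Fin (k + k) ⊕ Fin n ≃ Fin N)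
    (hs : ∀ i, s (Sum.inl (Fin.natAdd k i)) = ι i) (a b : HS k) (g : HS n) :
    T (splitTens s (pairTens a b) g) = splitTens s (pairTens a (O b)) g := by
  have hι : ∀ x : Fin N → R3, (fun i => x (s (Sum.inl (Fin.natAdd k i)))) = x ∘ ι :=
    fun x => by funext i; rw [hs, Function.comp_apply]
  have hcomm : ∀ a b : HS k, ⇑(splitTens s (pairTens a b) g) =ᵐ[volume] fun x =>
      b (x ∘ ι) * (a (fun i => x (s (Sum.inl (Fin.castAdd k i)))) *
        g (fun j => x (s (Sum.inr j)))) := by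
    intro a b
    filter_upwards [coeFn_splitTens_pairTens s a b g] with x hx
    rw [hx, hι]
    ring
  refine hT b (fun x => a (fun i => x (s (Sum.inl (Fin.castAdd k i)))) *
    g (fun j => x (s (Sum.inr j)))) _ _ ?_ (hcomm a b) (hcomm a (O b))
  intro x y hxy
  congr 1
  · refine congrArg a (funext fun j => hxy _ ?_)
    rintro ⟨i, hi⟩
    rw [← hs] at hi
    have := Sum.inl_injective (s.injective hi)
    simp [Fin.ext_iff] at this
    omega
  · refine congrArg g (funext fun j => hxy _ ?_)
    rintro ⟨i, hi⟩
    rw [← hs] at hi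
    simpa using s.injective hi

/-- On a state `Φ ⊗ Φ ⊗ g`, two centred observables acting on the two separate factors `Φ` are
uncorrelated. -/
theorem inner_centred_pair_eq_zero {O : HS k →L[ℂ] HS k} {ι ι' : Fin k → Fin N}
    {T T' : HS N →L[ℂ] HS N} (hT : IsLift k N O ι T) (hT' : IsLift k N O ι' T')
    (s : Fin (k + k) ⊕ Fin n ≃ Fin N)
    (hs : ∀ i, s (Sum.inl (Fin.castAdd k i)) = ι i)
    (hs' : ∀ i, s (Sum.inl (Fin.natAdd k i)) = ι' i)
    (Φ : HS k) (hΦ : ‖Φ‖ = 1) (g : HS n) :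
    ⟪splitTens s (pairTens Φ Φ) g, (T - ⟪Φ, O Φ⟫ • (1 : HS N →L[ℂ] HS N))
      ((T' - ⟪Φ, O Φ⟫ • (1 : HS N →L[ℂ] HS N)) (splitTens s (pairTens Φ Φ) g))⟫ = 0 := by
  have h1 : ⟪Φ, Φ⟫ = 1 := by rw [inner_self_eq_norm_sq_to_K, hΦ]; simp
  simp only [sub_apply, smul_apply, one_apply_eq_self, map_sub, map_smul, inner_sub_right,
    inner_smul_right, hT'.apply_right s hs', hT.apply_left s hs]
  simp only [inner_splitTens, pairTens, h1]
  ring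

end TensorPower

/-! ### Counting and estimates -/

section Estimates

/-- Replacing `ψ` by `χ` in `⟪ψ, A B ψ⟫` costs at most `2 C² ‖ψ - χ‖`. -/
theorem norm_inner_le_of_approx {H : Type*} [NormedAddCommGroup H] [InnerProductSpace ℂ H]
    (ψ χ : H) (hψ : ‖ψ‖ = 1) (hχ : ‖χ‖ ≤ 1) (A B : H →L[ℂ] H) (C : ℝ)
    (hA : ‖A‖ ≤ C) (hB : ‖B‖ ≤ C) (h0 : ⟪χ, A (B χ)⟫ = 0) :
    ‖⟪ψ, A (B ψ)⟫‖ ≤ 2 * C ^ 2 * ‖ψ - χ‖ := by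
  have hC : 0 ≤ C := (norm_nonneg A).trans hA
  have hAB : ∀ v, ‖A (B v)‖ ≤ C ^ 2 * ‖v‖ := fun v =>
    calc ‖A (B v)‖ ≤ ‖A‖ * ‖B v‖ := A.le_opNorm _
      _ ≤ ‖A‖ * (‖B‖ * ‖v‖) := by gcongr; exact B.le_opNorm _
      _ ≤ C * (C * ‖v‖) := by gcongr
      _ = C ^ 2 * ‖v‖ := by ring
  have h : ⟪ψ, A (B ψ)⟫ = ⟪ψ - χ, A (B ψ)⟫ + ⟪χ, A (B (ψ - χ))⟫ := by
    simp only [map_sub, inner_sub_left, inner_sub_right, h0]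
    ring
  rw [h]
  have h1 : ‖⟪ψ - χ, A (B ψ)⟫‖ ≤ ‖ψ - χ‖ * (C ^ 2 * 1) :=
    (norm_inner_le_norm _ _).trans (by gcongr; simpa [hψ] using hAB ψ)
  have h2 : ‖⟪χ, A (B (ψ - χ))⟫‖ ≤ 1 * (C ^ 2 * ‖ψ - χ‖) :=
    (norm_inner_le_norm _ _).trans (by gcongr; exact hAB _)
  linarith [norm_add_le ⟪ψ - χ, A (B ψ)⟫ ⟪χ, A (B (ψ - χ))⟫]

open Classical in
/-- At least `N (N-1) ⋯ (N-2k+1)` pairs of `k`-tuples of labels are disjoint, since each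
injective `2k`-tuple splits into such a pair. -/
theorem descFactorial_le_card_disjoint (k N : ℕ) :
    N.descFactorial (k + k) ≤ (Finset.univ.filter
      fun p : (Fin k ↪ Fin N) × (Fin k ↪ Fin N) =>
        Disjoint (Set.range p.1) (Set.range p.2)).card := by
  have h1 : N.descFactorial (k + k) = (Finset.univ : Finset (Fin (k + k) ↪ Fin N)).card := by
    rw [Finset.card_univ, Fintype.card_embedding_eq, Fintype.card_fin, Fintype.card_fin]
  rw [h1]
  refine Finset.card_le_card_of_injOn
    (fun κ => ((Fin.castAddEmb k).trans κ, (Fin.natAddEmb k).trans κ)) ?_ ?_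
  · intro κ _
    simp only [Finset.coe_filter, Finset.mem_univ, true_and, Set.mem_ofPred_eq]
    rw [Set.disjoint_iff_forall_ne]
    rintro _ ⟨i, rfl⟩ _ ⟨j, rfl⟩ hij
    have := κ.injective hij
    simp [Fin.ext_iff] at this
    omega
  · intro κ _ κ' _ h
    simp only [Prod.mk.injEq] at h
    ext i
    refine Fin.addCases (fun i => ?_) (fun i => ?_) i
    · exact congrArg Fin.val (DFunLike.congr_fun h.1 i)
    · exact congrArg Fin.val (DFunLike.congr_fun h.2 i)

/-- Asymptotically almost all pairs of `k`-tuples of labels are disjoint. -/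
theorem tendsto_descFactorial_ratio (k : ℕ) :
    Tendsto (fun N : ℕ => (N.descFactorial (k + k) : ℝ) / (N.descFactorial k : ℝ) ^ 2)
      atTop (nhds 1) := by
  have h := (isEquivalent_descFactorial (k + k)).div ((isEquivalent_descFactorial k).pow 2)
  refine (h.symm.tendsto_nhds (c := 1) ?_)
  refine tendsto_const_nhds.congr' ?_
  filter_upwards [eventually_gt_atTop 0] with N hN
  have : (N : ℝ) ≠ 0 := by positivity
  simp only [Pi.div_apply, Pi.pow_apply]
  rw [← pow_mul, mul_two, div_self (pow_ne_zero _ this)]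

/-- Bound on the second moment when disjoint pairs contribute at most `2 C² ε` and all others at
most `C²`. -/
theorem norm_second_moment_le {H : Type*} [NormedAddCommGroup H] [InnerProductSpace ℂ H]
    (k N : ℕ) (hkN : k ≤ N) (ψ : H) (hψ : ‖ψ‖ = 1) (A : (Fin k ↪ Fin N) → H →L[ℂ] H)
    (C ε : ℝ) (hε : 0 ≤ ε) (hA : ∀ ι, ‖A ι‖ ≤ C)
    (hdisj : ∀ ι ι' : Fin k ↪ Fin N, Disjoint (Set.range ι) (Set.range ι') →
      ‖⟪ψ, A ι (A ι' ψ)⟫‖ ≤ 2 * C ^ 2 * ε) :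
    ‖⟪ψ, (((N.choose k : ℂ)⁻¹ • ∑ ι, A ι) ^ 2 : H →L[ℂ] H) ψ⟫‖ ≤
      (k.factorial : ℝ) ^ 2 * (2 * C ^ 2 * ε + C ^ 2 *
        (1 - (N.descFactorial (k + k) : ℝ) / (N.descFactorial k : ℝ) ^ 2)) := by
  classical
  let E := (Fin k ↪ Fin N) × (Fin k ↪ Fin N)
  let D : Finset E := Finset.univ.filter
    fun p => Disjoint (Set.range p.1) (Set.range p.2)
  have hterm : ∀ p : E, ‖⟪ψ, A p.1 (A p.2 ψ)⟫‖ ≤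
      2 * C ^ 2 * ε + C ^ 2 * (1 - if p ∈ D then 1 else 0) := by
    intro p
    have hC : 0 ≤ C := (norm_nonneg (A p.1)).trans (hA _)
    split_ifs with hp
    · simpa using hdisj p.1 p.2 (Finset.mem_filter.1 hp).2
    · have h1 : ‖⟪ψ, A p.1 (A p.2 ψ)⟫‖ ≤ C ^ 2 :=
        calc _ ≤ ‖ψ‖ * ‖A p.1 (A p.2 ψ)‖ := norm_inner_le_norm _ _
          _ ≤ 1 * (‖A p.1‖ * (‖A p.2‖ * ‖ψ‖)) := by
            rw [hψ]
            gcongr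
            refine ((A p.1).le_opNorm _).trans ?_
            gcongr
            simpa [hψ] using (A p.2).le_opNorm ψ
          _ ≤ 1 * (C * (C * 1)) := by
            rw [hψ]
            gcongr <;> exact hA _
          _ = C ^ 2 := by ring
      have : 0 ≤ 2 * C ^ 2 * ε := by positivity
      linarith
  have hE : (Fintype.card E : ℝ) = (N.descFactorial k : ℝ) ^ 2 := by
    simp [E, Fintype.card_embedding_eq, sq]
  have hD : (N.descFactorial (k + k) : ℝ) ≤ D.card :=
    by exact_mod_cast descFactorial_le_card_disjoint k N
  have hexp : ⟪ψ, (((N.choose k : ℂ)⁻¹ • ∑ ι, A ι) ^ 2 : H →L[ℂ] H) ψ⟫ =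
      ((N.choose k : ℂ)⁻¹) ^ 2 * ∑ p : E, ⟪ψ, A p.1 (A p.2 ψ)⟫ := by
    rw [Fintype.sum_prod_type]
    simp only [sq, mul_apply_eq_comp, smul_apply, sum_apply, map_smul, map_sum,
      inner_smul_right, inner_sum]
    rw [mul_assoc, ← Finset.mul_sum, Finset.sum_comm]
  have hd : (N.descFactorial k : ℝ) = k.factorial * N.choose k := by
    exact_mod_cast Nat.descFactorial_eq_factorial_mul_choose N k
  have hch : (0 : ℝ) < N.choose k := by exact_mod_cast Nat.choose_pos hkN
  have hk : (0 : ℝ) < k.factorial := by exact_mod_cast k.factorial_pos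
  have hsum : ‖∑ p : E, ⟪ψ, A p.1 (A p.2 ψ)⟫‖ ≤
      (N.descFactorial k : ℝ) ^ 2 * (2 * C ^ 2 * ε) +
        C ^ 2 * ((N.descFactorial k : ℝ) ^ 2 - N.descFactorial (k + k)) :=
    calc _ ≤ ∑ p : E, ‖⟪ψ, A p.1 (A p.2 ψ)⟫‖ := norm_sum_le _ _
      _ ≤ ∑ p : E, (2 * C ^ 2 * ε + C ^ 2 * (1 - if p ∈ D then 1 else 0)) :=
        Finset.sum_le_sum fun p _ => hterm p
      _ = (N.descFactorial k : ℝ) ^ 2 * (2 * C ^ 2 * ε) +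
          C ^ 2 * ((N.descFactorial k : ℝ) ^ 2 - D.card) := by
        rw [Finset.sum_add_distrib, Finset.sum_const, ← Finset.mul_sum, Finset.sum_sub_distrib]
        simp [← hE]
      _ ≤ _ := by gcongr
  rw [hexp, norm_mul, norm_pow, norm_inv, Complex.norm_natCast]
  calc _ ≤ ((N.choose k : ℝ)⁻¹) ^ 2 * ((N.descFactorial k : ℝ) ^ 2 * (2 * C ^ 2 * ε) +
        C ^ 2 * ((N.descFactorial k : ℝ) ^ 2 - N.descFactorial (k + k))) := by gcongr
    _ = _ := by
      rw [hd]
      field_simp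

end Estimates

/-! ### The second moment -/

/-- **Vanishing second moment.**  If the normalized symmetric states `ψ_N` exhibit complete
Bose–Einstein condensation in `φ`, then the second moment
`⟨ψ_N, (binom(N,k)⁻¹ ∑_{i_k} (O_{i_k} - ⟨φ^{⊗k}, O φ^{⊗k}⟩))² ψ_N⟩` vanishes as `N → ∞`. -/
theorem second_moment_vanishes
    (k : ℕ) (hk : 0 < k)
    (O : HS k →L[ℂ] HS k) (hO : IsSelfAdjoint O)
    (φ : OneH) (hφ : ‖φ‖ = 1)
    (Φ : ∀ m : ℕ, HS m) (hΦ : ∀ m, IsTensorPow m φ (Φ m))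
    (ψ : ∀ N : ℕ, HS N)
    (hψnorm : ∀ N, k ≤ N → ‖ψ N‖ = 1)
    (hψsym : ∀ N, k ≤ N → ∀ σ : Equiv.Perm (Fin N),
      ∀ᵐ x : Fin N → R3 ∂volume, ψ N (x ∘ σ) = ψ N x)
    -- complete Bose–Einstein condensation in the state `φ`:
    (hBEC : ∀ (ℓ : ℕ), 0 < ℓ → ∀ (B : HS ℓ →L[ℂ] HS ℓ)
      (Blift : ∀ N : ℕ, HS N →L[ℂ] HS N),
      (∀ N (h : ℓ ≤ N), IsLift ℓ N B (Fin.castLE h) (Blift N)) →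
      Tendsto (fun N => ⟪ψ N, Blift N (ψ N)⟫) atTop (nhds ⟪Φ ℓ, B (Φ ℓ)⟫))
    -- the lifted operators `O_{i_k}`, indexed by injections `ι : Fin k ↪ Fin N`:
    (Olift : ∀ N : ℕ, (Fin k ↪ Fin N) → (HS N →L[ℂ] HS N))
    (hOlift : ∀ N, k ≤ N → ∀ ι : Fin k ↪ Fin N, IsLift k N O (⇑ι) (Olift N ι))
    -- the centred averaged sum `T N = binom(N,k)⁻¹ ∑_{i_k ∈ I_N^{(k)}} (O_{i_k} - ⟨φ^{⊗k}, O φ^{⊗k}⟩)`: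
    (T : ∀ N : ℕ, HS N →L[ℂ] HS N)
    (hT : ∀ N, T N = (N.choose k : ℂ)⁻¹ •
      ∑ ι : Fin k ↪ Fin N, (Olift N ι - ⟪Φ k, O (Φ k)⟫ • (1 : HS N →L[ℂ] HS N))) :
    Tendsto (fun N => (⟪ψ N, ((T N) ^ 2) (ψ N)⟫).re) atTop (nhds 0) := by
  have hΦ1 : ∀ m, ‖Φ m‖ = 1 := fun m => norm_isTensorPow φ hφ m (Φ m) (hΦ m)
  have hpair : Φ (k + k) = pairTens (Φ k) (Φ k) :=
    isTensorPow_add φ (Φ k) (hΦ k) (Φ (k + k)) (hΦ (k + k))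
  choose Q hQ using exists_ketBraLift (Φ (k + k)) (hΦ1 (k + k))
  have hq : Tendsto (fun N => (⟪ψ N, Q N (ψ N)⟫).re) atTop (nhds 1) := by
    have h1 := hBEC (k + k) (by omega) (ketBra (Φ (k + k))) Q fun N h => (hQ N h).1
    have h2 : ⟪Φ (k + k), ketBra (Φ (k + k)) (Φ (k + k))⟫ = 1 := by
      rw [ketBra_apply, inner_smul_right, inner_self_eq_norm_sq_to_K, hΦ1]
      simp
    rw [h2] at h1
    have h3 := (Complex.continuous_re.tendsto 1).comp h1
    rw [Complex.one_re] at h3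
    exact h3
  -- For `N ≥ 2k`, `ε N` is the distance from `ψ N` to the range of the lifted projection onto
  -- `φ^{⊗2k}`.
  set ε : ℕ → ℝ := fun N => √(1 - (⟪ψ N, Q N (ψ N)⟫).re) with hε
  have hε0 : Tendsto ε atTop (nhds 0) := by
    simpa using (hq.const_sub 1).sqrt
  set c : ℂ := ⟪Φ k, O (Φ k)⟫ with hc
  set C : ℝ := ‖O‖ + ‖c‖ with hC
  have hbound : ∀ N, k + k ≤ N → ‖(⟪ψ N, ((T N) ^ 2) (ψ N)⟫).re‖ ≤
      (k.factorial : ℝ) ^ 2 * (2 * C ^ 2 * ε N + C ^ 2 *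
        (1 - (N.descFactorial (k + k) : ℝ) / (N.descFactorial k : ℝ) ^ 2)) := by
    intro N hN
    have hkN : k ≤ N := by omega
    have hnorm : ∀ ι : Fin k ↪ Fin N, ‖Olift N ι - c • (1 : HS N →L[ℂ] HS N)‖ ≤ C := by
      intro ι
      refine (norm_sub_le _ _).trans (add_le_add ?_ ?_)
      · exact (hOlift N hkN ι).opNorm_le ι.injective hkN
      · rw [norm_smul]
        exact mul_le_of_le_one_right (norm_nonneg _) ContinuousLinearMap.norm_id_le
    rw [hT N]
    refine (Complex.abs_re_le_norm _).trans
      (norm_second_moment_le k N hkN (ψ N) (hψnorm N hkN) _ C (ε N) (Real.sqrt_nonneg _) hnorm ?_)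
    intro ι ι' hdisj
    obtain ⟨n, s, g, hs, hχ, hdist⟩ := (hQ N hN).2 (ψ N) (hψnorm N hkN) (hψsym N hkN)
      (Fin.Embedding.append hdisj) (Fin.Embedding.append hdisj).injective
    have hεN : ε N = ‖ψ N - splitTens s (Φ (k + k)) g‖ := by
      rw [hε]
      simp only
      rw [← hdist, Real.sqrt_sq (norm_nonneg _)]
    rw [hεN]
    refine norm_inner_le_of_approx _ _ (hψnorm N hkN) hχ _ _ C (hnorm ι) (hnorm ι') ?_
    rw [hpair]
    refine inner_centred_pair_eq_zero (hOlift N hkN ι) (hOlift N hkN ι') s ?_ ?_ (Φ k)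
      (hΦ1 k) g
    · intro i
      rw [hs, Fin.Embedding.coe_append, Fin.append_left]
    · intro i
      rw [hs, Fin.Embedding.coe_append, Fin.append_right]
  refine squeeze_zero_norm' ((eventually_ge_atTop (k + k)).mono hbound) ?_
  have h := ((hε0.const_mul (2 * C ^ 2)).add
    (((tendsto_descFactorial_ratio k).const_sub 1).const_mul (C ^ 2))).const_mul
      ((k.factorial : ℝ) ^ 2)
  simpa using h

end
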